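/- Let ψ(u) = ( sin(π/2 − u) / (π/2 − u) ) · cos(π/2 − u)^{1/3} and Θ(u) = sin(π/2 − u)³ cos(π/2 − u) for u ∈ (0, π/2), and define F(u) = 2 ψ(u) ψ''(u) + ψ(u) Θ(u)^{-1} (Θψ)'(u) − 3 ψ'(u)². Then F(u) + (28/(9π²)) u^{−4/3} = O(u^{−1/3}) as u → 0⁺; equivalently F(u) = −(28/(9π²)) u^{−4/3} + O(u^{−1/3}), so F(u) is unbounded as u → 0⁺. -/

import Mathlib

open Real Filter Asymptotics
open scoped Topology

/-!
Write `s = sin u`, `c = cos u`, `w = s ^ (1/3)`, `q = (π/2 - u)⁻¹` and `A = c q`, so that `ψ = A w`.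
Since `w' = c / (3 w²)` and `w³ = s`, differentiating twice shows that on `(0, 1)` one has
`F = w⁻⁴ H`, where `H` (`profile` below) is a rational expression in `s, c, q` that is differentiable
at `0` (`F_eq`). There `s = 0`, `c = 1`, `q = 2/π`, so `H 0 = -(4/9 + 1/3) (2/π)² = -28/(9π²)`. Hence
`F - H 0 · u^{-4/3} = s^{-4/3} (H u - H 0) + H 0 (s^{-4/3} - u^{-4/3})`. The first term is
`O(u^{-4/3} · u)` because `H` is differentiable at `0`, and the second is too, because `sin u / u`
is within `O(u)` of `1` and `x ↦ x^{-4/3}` is differentiable at `1`.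
-/

/-- The regular factor `H` in `F = (sin u)^{-4/3} H`. With `A = cos u / (π/2 - u)`, the local
variables `A, A₁, A₂` are `A` and its first two derivatives. -/
noncomputable def profile (u : ℝ) : ℝ :=
  let s := sin u
  let c := cos u
  let q := (π / 2 - u)⁻¹
  let A := c * q
  let A₁ := -s * q + c * q ^ 2
  let A₂ := -c * q - 2 * s * q ^ 2 + 2 * c * q ^ 3
  2 * A * (A₂ * s ^ 2 + 2 / 3 * A₁ * c * s - A / 3 * s ^ 2 - 2 / 9 * A * c ^ 2)
    + (A * s * (A₁ * s + A * c / 3) + A ^ 2 * (c * s - 3 * s ^ 3 * c⁻¹))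
    - 3 * (A₁ * s + A * c / 3) ^ 2

lemma profile_zero : profile 0 = -(28 / (9 * π ^ 2)) := by
  have := pi_ne_zero
  simp only [profile, sin_zero, cos_zero]
  field_simp
  ring

lemma profile_sub_isBigO :
    (fun u => profile u - profile 0) =O[𝓝[>] (0 : ℝ)] fun u => u := by
  have hd : DifferentiableAt ℝ profile 0 := by
    have h1 : π / 2 - (0 : ℝ) ≠ 0 := by
      have := pi_pos
      rw [sub_zero]; positivity
    have h2 : cos (0 : ℝ) ≠ 0 := by simp
    unfold profile
    fun_prop (disch := assumption)
  simpa using hd.isBigO_sub.mono nhdsWithin_le_nhds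

lemma hasDerivAt_q {u : ℝ} (h : π / 2 - u ≠ 0) :
    HasDerivAt (fun u : ℝ => (π / 2 - u)⁻¹) ((π / 2 - u)⁻¹ ^ 2) u := by
  have := ((hasDerivAt_id u).const_sub (π / 2)).inv h
  exact this.congr_deriv (by simp [div_eq_mul_inv])

lemma hasDerivAt_w {u : ℝ} (h : 0 < sin u) :
    HasDerivAt (fun u : ℝ => sin u ^ ((1 : ℝ) / 3))
      (cos u / 3 * ((sin u ^ ((1 : ℝ) / 3))⁻¹) ^ 2) u := by
  have := (hasDerivAt_sin u).rpow_const (p := (1 : ℝ) / 3) (Or.inl h.ne')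
  convert this using 1
  have e : sin u ^ ((1 : ℝ) / 3 - 1) = ((sin u ^ ((1 : ℝ) / 3))⁻¹) ^ 2 := by
    rw [← rpow_neg h.le, ← rpow_natCast, ← rpow_mul h.le]
    norm_num
  rw [e]; ring

lemma pow_w {u : ℝ} (h : 0 < sin u) : (sin u ^ ((1 : ℝ) / 3)) ^ 3 = sin u := by
  rw [← rpow_natCast, ← rpow_mul h.le]; norm_num

/-- After substituting the explicit derivatives, both sides are rational in `w, q, cos u`, where
`w = (sin u)^{1/3}`, and the identity reduces to polynomial algebra using `sin u = w³`. -/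
lemma F_eq (ψ Θ F : ℝ → ℝ)
    (hψ : ∀ u, ψ u = (Real.sin (π / 2 - u) / (π / 2 - u)) *
        Real.cos (π / 2 - u) ^ ((1 : ℝ) / 3))
    (hΘ : ∀ u, Θ u = Real.sin (π / 2 - u) ^ 3 * Real.cos (π / 2 - u))
    (hF : ∀ u, F u = 2 * ψ u * deriv (deriv ψ) u
        + ψ u * (Θ u)⁻¹ * deriv (fun t => Θ t * ψ t) u
        - 3 * (deriv ψ u) ^ 2) {u : ℝ} (hu : u ∈ Set.Ioo (0 : ℝ) 1) :
    F u = sin u ^ (-(4 : ℝ) / 3) * profile u := by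
  have hpos : ∀ v ∈ Set.Ioo (0 : ℝ) 1, 0 < sin v ∧ 0 < cos v ∧ π / 2 - v ≠ 0 := by
    intro v hv
    have := pi_gt_three
    exact ⟨sin_pos_of_pos_of_lt_pi hv.1 (by linarith [hv.2]),
      cos_pos_of_mem_Ioo ⟨by linarith [hv.1], by linarith [hv.2]⟩, by linarith [hv.2]⟩
  have hψ' : ψ = fun u => cos u * (π / 2 - u)⁻¹ * sin u ^ ((1 : ℝ) / 3) := by
    funext v
    rw [hψ, sin_pi_div_two_sub, cos_pi_div_two_sub, div_eq_mul_inv]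
  have hΘ' : Θ = fun u => cos u ^ 3 * sin u := by
    funext v
    rw [hΘ, sin_pi_div_two_sub, cos_pi_div_two_sub]
  have d1 : ∀ v ∈ Set.Ioo (0 : ℝ) 1, HasDerivAt ψ
      ((-sin v * (π / 2 - v)⁻¹ + cos v * (π / 2 - v)⁻¹ ^ 2) * sin v ^ ((1 : ℝ) / 3)
        + cos v * (π / 2 - v)⁻¹ * (cos v / 3 * ((sin v ^ ((1 : ℝ) / 3))⁻¹) ^ 2)) v := by
    intro v hv
    obtain ⟨h1, h2, h3⟩ := hpos v hv
    rw [hψ']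
    exact ((hasDerivAt_cos v).mul (hasDerivAt_q h3)).mul (hasDerivAt_w h1)
  obtain ⟨h1, h2, h3⟩ := hpos u hu
  have hw : 0 < sin u ^ ((1 : ℝ) / 3) := rpow_pos_of_pos h1 _
  have hc := hasDerivAt_cos u
  have hs := hasDerivAt_sin u
  have hq := hasDerivAt_q h3
  have hwd := hasDerivAt_w h1
  have hd1 := (d1 u hu).deriv
  have hev : deriv ψ =ᶠ[𝓝 u] _ :=
    Filter.eventually_of_mem (isOpen_Ioo.mem_nhds hu) fun v hv => (d1 v hv).deriv
  have hd2 := hev.deriv_eq.trans (((((hs.neg.mul hq).add (hc.mul (hq.pow 2))).mul hwd).add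
    ((hc.mul hq).mul ((hc.div_const 3).mul ((hwd.inv hw.ne').pow 2))))).deriv
  have hΘd : HasDerivAt Θ (3 * cos u ^ 2 * (-sin u) * sin u + cos u ^ 3 * cos u) u := by
    rw [hΘ']; exact (hc.pow 3).mul hs
  have hd3 : deriv (fun t => Θ t * ψ t) u = _ := (hΘd.mul (d1 u hu)).deriv
  have e4 : sin u ^ (-(4 : ℝ) / 3) = ((sin u ^ ((1 : ℝ) / 3))⁻¹) ^ 4 := by
    rw [← rpow_neg h1.le, ← rpow_natCast, ← rpow_mul h1.le]
    norm_num
  have hw3 := pow_w h1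
  rw [hF, hd2, hd3, hd1, e4]
  simp only [hψ', hΘ', profile, Pi.mul_apply, Pi.inv_apply, Pi.pow_apply, Pi.neg_apply, Pi.add_apply,
    Nat.add_one_sub_one, pow_one, Nat.cast_ofNat]
  generalize sin u ^ ((1 : ℝ) / 3) = w at *
  generalize (π / 2 - u)⁻¹ = q at *
  rw [← hw3]
  generalize cos u = c at *
  field_simp
  ring

/-- `(sin u)^{-4/3}` and `u^{-4/3}` differ by a lower-order term. -/
lemma sin_rpow_sub_isBigO :
    (fun u : ℝ => sin u ^ (-(4 : ℝ) / 3) - u ^ (-(4 : ℝ) / 3)) =O[𝓝[>] (0 : ℝ)]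
      fun u => u ^ (-(4 : ℝ) / 3) * u := by
  have hr : (fun u : ℝ => sin u / u - 1) =O[𝓝[>] (0 : ℝ)] fun u => u := by
    refine IsBigO.of_bound 1 ?_
    filter_upwards [Ioo_mem_nhdsGT (zero_lt_one (α := ℝ))] with u hu
    have h1 := sin_lt hu.1
    have h2 := sin_gt_sub_cube hu.1
    have h3 := hu.1
    have h4 := hu.2
    rw [one_mul, norm_eq_abs, norm_eq_abs, abs_of_pos h3,
      div_sub_one h3.ne', abs_div, abs_of_pos h3, div_le_iff₀ h3, abs_le]
    constructor <;> nlinarith [mul_pos h3 h3, mul_pos (mul_pos h3 h3) (sub_pos.2 h4)]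
  have ht : Tendsto (fun u : ℝ => sin u / u) (𝓝[>] (0 : ℝ)) (𝓝 1) := by
    have h0 : Tendsto (fun u : ℝ => u) (𝓝[>] (0 : ℝ)) (𝓝 0) :=
      tendsto_id.mono_left nhdsWithin_le_nhds
    simpa using (hr.trans_tendsto h0).add_const 1
  have hd : DifferentiableAt ℝ (fun x : ℝ => x ^ (-(4 : ℝ) / 3)) 1 :=
    (hasDerivAt_rpow_const (Or.inl one_ne_zero)).differentiableAt
  have h := (isBigO_refl (fun u : ℝ => u ^ (-(4 : ℝ) / 3)) (𝓝[>] (0 : ℝ))).mul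
    ((hd.isBigO_sub.comp_tendsto ht).trans hr)
  refine h.congr' ?_ EventuallyEq.rfl
  filter_upwards [Ioo_mem_nhdsGT (zero_lt_one (α := ℝ))] with u hu
  have hs : 0 < sin u := sin_pos_of_pos_of_lt_pi hu.1 (by linarith [hu.2, pi_gt_three])
  have hp := rpow_pos_of_pos hu.1 (-(4 : ℝ) / 3)
  simp only [Function.comp, one_rpow]
  rw [div_rpow hs.le hu.1.le, mul_sub, mul_div_cancel₀ _ hp.ne', mul_one]

/-- For `m = 4`: with `ψ(u) = (sin(π/2−u)/(π/2−u)) · cos(π/2−u)^{1/3}`,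
`Θ(u) = sin(π/2−u)^3 cos(π/2−u)` and
`F(u) = 2 ψψ'' + ψΘ⁻¹(Θψ)' − 3 (ψ')²`, one has
`F(u) = −(28/(9 π²)) u^{−4/3} + O(u^{−1/3})` as `u → 0⁺`. -/
theorem stmt11 (ψ Θ F : ℝ → ℝ)
    (hψ : ∀ u, ψ u = (Real.sin (π / 2 - u) / (π / 2 - u)) *
        Real.cos (π / 2 - u) ^ ((1 : ℝ) / 3))
    (hΘ : ∀ u, Θ u = Real.sin (π / 2 - u) ^ 3 * Real.cos (π / 2 - u))
    (hF : ∀ u, F u = 2 * ψ u * deriv (deriv ψ) u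
        + ψ u * (Θ u)⁻¹ * deriv (fun t => Θ t * ψ t) u
        - 3 * (deriv ψ u) ^ 2) :
    (fun u => F u + (28 / (9 * π ^ 2)) * u ^ (-(4 : ℝ) / 3)) =O[𝓝[>] (0 : ℝ)]
      fun u => u ^ (-(1 : ℝ) / 3) := by
  have hid : Tendsto (fun u : ℝ => u) (𝓝[>] (0 : ℝ)) (𝓝 0) :=
    tendsto_id.mono_left nhdsWithin_le_nhds
  have hsin : (fun u : ℝ => sin u ^ (-(4 : ℝ) / 3)) =O[𝓝[>] (0 : ℝ)]
      fun u => u ^ (-(4 : ℝ) / 3) := by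
    have h : (fun u : ℝ => u ^ (-(4 : ℝ) / 3) * u) =O[𝓝[>] (0 : ℝ)]
        fun u => u ^ (-(4 : ℝ) / 3) := by
      simpa using (isBigO_refl (fun u : ℝ => u ^ (-(4 : ℝ) / 3)) (𝓝[>] (0 : ℝ))).mul
        (hid.isBigO_one ℝ)
    simpa using (sin_rpow_sub_isBigO.trans h).add (isBigO_refl _ _)
  have h := (hsin.mul profile_sub_isBigO).add (sin_rpow_sub_isBigO.const_mul_left (profile 0))
  refine h.congr' ?_ ?_
  · filter_upwards [Ioo_mem_nhdsGT (zero_lt_one (α := ℝ))] with u hu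
    rw [F_eq ψ Θ F hψ hΘ hF hu, profile_zero]
    ring
  · filter_upwards [self_mem_nhdsWithin] with u hu
    rw [← rpow_add_one (ne_of_gt hu)]
    norm_num
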